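/- Let D_1 and D_2 be two vertex-disjoint digraphs with Hamiltonian cycles C_1 = (x_0, x_1, …, x_{n−1}, x_0) and C_2 = (y_0, y_1, …, y_{m−1}, y_0) respectively, with n ≥ m, let d = gcd(n, m), and let D ∈ D_1 ⊕ D_2 be strong. If for some i ∈ {1,2} the cycle C_i contains at least one d*-singular vertex with respect to C_{3−i}, then D is pancyclic. -/

import Mathlib

/-!
Colour the pair `(a, b) ∈ ZMod n × ZMod m` red when `x a → y b`, and blue otherwise (so that
`y b → x a`). If `(a + s, b)` is red and `(a, b + t)` is blue, with `s < n` and `t < m`, then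
`x a, …, x (a + s), y b, …, y (b + t)` is a cycle of length `s + t + 2`
(`hasCycle_of_red_blue`). So if `D` has no cycle of length `l`, the red set is mapped
into itself by the translations by `(-s, t)` with `s + t + 2 = l`, and since the group is finite it
is invariant under them. For `3 ≤ l < n + m` two admissible pairs `(s, t + 1)` and `(s + 1, t)`
exist and their difference gives invariance under `(1, 1)`; for `l = n + m` the only
admissible pair `(n - 1, m - 1)` gives invariance under `(1, -1)` (`invariant_of_no_cycle`).

A colour class invariant under `(1, ±1)` is also invariant under `(0, gcd n m)`, so a single row
with `gcd n m` consecutive entries of one colour makes all pairs have that colour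
(`forall_of_invariant`). A singular vertex provides such a row (or column), and then all arcs
between the two summands point the same way, contradicting strong connectivity.
-/

/-- A digraph: a finite vertex set together with an irreflexive arc relation
whose arcs join vertices of the digraph. -/
structure FinDigraph (α : Type) [DecidableEq α] where
  verts : Finset α
  Arc : α → α → Prop
  arc_mem_left : ∀ {u v : α}, Arc u v → u ∈ verts
  arc_mem_right : ∀ {u v : α}, Arc u v → v ∈ verts
  arc_irrefl : ∀ v : α, ¬ Arc v v

namespace FinDigraph

variable {α : Type} [DecidableEq α]

/-- `c` lists, in cyclic order, the vertices of a directed cycle of length `l` in `D`. -/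
def CycleOn (D : FinDigraph α) {l : ℕ} (c : ZMod l → α) : Prop :=
  Function.Injective c ∧ ∀ i : ZMod l, D.Arc (c i) (c (i + 1))

/-- `D` contains a directed cycle of length `l`. -/
def HasCycle (D : FinDigraph α) (l : ℕ) : Prop :=
  ∃ c : ZMod l → α, D.CycleOn c

/-- `D` contains a directed cycle of length `l` passing through `v`. -/
def HasCycleThrough (D : FinDigraph α) (l : ℕ) (v : α) : Prop :=
  ∃ c : ZMod l → α, D.CycleOn c ∧ ∃ i : ZMod l, c i = v

/-- `c` is a Hamiltonian cycle of `D`. -/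
def IsHamCycle (D : FinDigraph α) {l : ℕ} (c : ZMod l → α) : Prop :=
  D.CycleOn c ∧ ∀ v ∈ D.verts, ∃ i : ZMod l, c i = v

/-- `D` contains a directed cycle through all of its vertices. -/
def Hamiltonian (D : FinDigraph α) : Prop :=
  ∃ c : ZMod D.verts.card → α, D.IsHamCycle c

/-- For every ordered pair of vertices `u`, `v` there is a directed path from `u` to `v`. -/
def Strong (D : FinDigraph α) : Prop :=
  ∀ u ∈ D.verts, ∀ v ∈ D.verts, Relation.ReflTransGen D.Arc u v

/-- `D` (of order at least 3) has directed cycles of every length from 3 to its order. -/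
def Pancyclic (D : FinDigraph α) : Prop :=
  3 ≤ D.verts.card ∧ ∀ l : ℕ, 3 ≤ l → l ≤ D.verts.card → D.HasCycle l

/-- Every vertex of `D` lies on directed cycles of every length from 3 to the order of `D`. -/
def VertexPancyclic (D : FinDigraph α) : Prop :=
  3 ≤ D.verts.card ∧
    ∀ v ∈ D.verts, ∀ l : ℕ, 3 ≤ l → l ≤ D.verts.card → D.HasCycleThrough l v

/-- `D` is a generalized sum of the two vertex-disjoint digraphs `D1` and `D2`:
its vertex set is the union of theirs, it induces each of them, and between any two
vertices of different summands there is exactly one arc. -/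
def GenSum2 (D1 D2 D : FinDigraph α) : Prop :=
  D.verts = D1.verts ∪ D2.verts ∧
  (∀ u v : α, u ∈ D1.verts → v ∈ D1.verts → (D.Arc u v ↔ D1.Arc u v)) ∧
  (∀ u v : α, u ∈ D2.verts → v ∈ D2.verts → (D.Arc u v ↔ D2.Arc u v)) ∧
  (∀ u v : α, u ∈ D1.verts → v ∈ D2.verts → Xor' (D.Arc u v) (D.Arc v u))

/-- `D` is a generalized sum of the pairwise vertex-disjoint digraphs `Ds i`. -/
def GenSum {k : ℕ} (Ds : Fin k → FinDigraph α) (D : FinDigraph α) : Prop :=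
  D.verts = Finset.univ.biUnion (fun i => (Ds i).verts) ∧
  (∀ i : Fin k, ∀ u v : α, u ∈ (Ds i).verts → v ∈ (Ds i).verts →
    (D.Arc u v ↔ (Ds i).Arc u v)) ∧
  (∀ i j : Fin k, i ≠ j → ∀ u v : α, u ∈ (Ds i).verts → v ∈ (Ds j).verts →
    Xor' (D.Arc u v) (D.Arc v u))

end FinDigraph

open FinDigraph

/-- `v` is `d*`-singular with respect to the cycle listed by `y`: there are `d`
consecutive vertices of the cycle all dominated by `v`, or all dominating `v`. -/
def DStarSingular {α : Type} [DecidableEq α] (D : FinDigraph α) {m : ℕ}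
    (y : ZMod m → α) (d : ℕ) (v : α) : Prop :=
  ∃ i : ZMod m,
    (∀ j : ℕ, j < d → D.Arc v (y (i + (j : ZMod m)))) ∨
    (∀ j : ℕ, j < d → D.Arc (y (i + (j : ZMod m))) v)

namespace FinDigraph

variable {α : Type} [DecidableEq α]

lemma hasCycle_of_seq (D : FinDigraph α) {l : ℕ} (hl : 0 < l) (f : ℕ → α)
    (hinj : ∀ i < l, ∀ j < l, f i = f j → i = j)
    (harc : ∀ i, i + 1 < l → D.Arc (f i) (f (i + 1)))
    (hlast : D.Arc (f (l - 1)) (f 0)) : D.HasCycle l := by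
  have : NeZero l := ⟨hl.ne'⟩
  refine ⟨fun i => f i.val, fun i j h => ?_, fun i => ?_⟩
  · exact ZMod.val_injective l (hinj _ (ZMod.val_lt i) _ (ZMod.val_lt j) h)
  · have hi := ZMod.val_lt i
    have hcast : ((i.val + 1 : ℕ) : ZMod l) = i + 1 := by simp
    have hv : (i + 1).val = (i.val + 1) % l := by rw [← hcast, ZMod.val_natCast]
    show D.Arc (f i.val) (f (i + 1).val)
    rw [hv]
    rcases Nat.lt_or_ge (i.val + 1) l with h | h
    · rw [Nat.mod_eq_of_lt h]
      exact harc _ h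
    · have h1 : i.val + 1 = l := by omega
      rw [h1, Nat.mod_self]
      have h2 : i.val = l - 1 := by omega
      rw [h2]
      exact hlast

lemma two_le_of_cycleOn (D : FinDigraph α) {l : ℕ} {c : ZMod l → α} (h : D.CycleOn c) :
    2 ≤ l := by
  have h0 : l ≠ 0 := by
    rintro rfl
    -- `ZMod 0 = ℤ` is infinite, so it does not embed into the finite vertex set
    have hfin : (Set.range c).Finite := D.verts.finite_toSet.subset (by
      rintro _ ⟨i, rfl⟩
      exact D.arc_mem_left (h.2 i))
    have hinf : Infinite (ZMod 0) := inferInstanceAs (Infinite ℤ)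
    exact Set.infinite_range_of_injective h.1 hfin
  have h1 : l ≠ 1 := by
    rintro rfl
    have := h.2 0
    rw [Subsingleton.elim (0 + 1 : ZMod 1) 0] at this
    exact D.arc_irrefl _ this
  omega

lemma card_of_isHamCycle (D : FinDigraph α) {l : ℕ} {c : ZMod l → α} (h : D.IsHamCycle c) :
    D.verts.card = l := by
  have : NeZero l := ⟨by have := two_le_of_cycleOn D h.1; omega⟩
  have : D.verts = Finset.univ.image c := by
    ext v
    simp only [Finset.mem_image, Finset.mem_univ, true_and]
    exact ⟨h.2 v, by rintro ⟨i, rfl⟩; exact D.arc_mem_left (h.1.2 i)⟩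
  rw [this, Finset.card_image_of_injective _ h.1.1, Finset.card_univ, ZMod.card]

lemma add_natCast_inj {n : ℕ} (a : ZMod n) {i j : ℕ} (hi : i < n) (hj : j < n)
    (h : a + (i : ZMod n) = a + (j : ZMod n)) : i = j := by
  have h' := (ZMod.natCast_eq_natCast_iff' i j n).1 (add_left_cancel h)
  rwa [Nat.mod_eq_of_lt hi, Nat.mod_eq_of_lt hj] at h'

/-- A segment `x a, …, x (a + s)` of one cycle and a segment `y b, …, y (b + t)` of a disjoint
cycle, joined by an arc at each end, form a cycle. -/
lemma hasCycle_of_red_blue (D : FinDigraph α) {n m : ℕ} {x : ZMod n → α} {y : ZMod m → α}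
    (hx : D.CycleOn x) (hy : D.CycleOn y) (hxy : ∀ i j, x i ≠ y j)
    {s t : ℕ} (hs : s < n) (ht : t < m) (a : ZMod n) (b : ZMod m)
    (h1 : D.Arc (x (a + s)) (y b)) (h2 : D.Arc (y (b + t)) (x a)) :
    D.HasCycle (s + t + 2) := by
  refine hasCycle_of_seq D (by omega)
    (fun i => if i ≤ s then x (a + (i : ZMod n)) else y (b + ((i - (s + 1) : ℕ) : ZMod m)))
    ?_ ?_ ?_
  · intro i hi j hj h
    split_ifs at h with his hjs hjs
    · exact add_natCast_inj a (by omega) (by omega) (hx.1 h)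
    · exact absurd h (hxy _ _)
    · exact absurd h.symm (hxy _ _)
    · have := add_natCast_inj b (by omega) (by omega) (hy.1 h)
      omega
  · intro i hi
    rcases lt_trichotomy i s with h | h | h
    · rw [if_pos h.le, if_pos (by omega)]
      have := hx.2 (a + i)
      rwa [add_assoc, ← Nat.cast_succ] at this
    · subst h
      simpa using h1
    · rw [if_neg (by omega), if_neg (by omega)]
      have := hy.2 (b + ((i - (s + 1) : ℕ) : ZMod m))
      rwa [add_assoc, ← Nat.cast_succ, show (i - (s + 1)).succ = i + 1 - (s + 1) by omega] at this
  · rw [if_neg (by omega), if_pos (by omega), show s + t + 2 - 1 - (s + 1) = t by omega]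
    simpa using h2

/-- A subset of a finite group that a translation maps into itself is invariant under it. -/
lemma iff_add_of_imp {G : Type} [AddCommGroup G] [Finite G] {P : G → Prop} {g : G}
    (h : ∀ p, P p → P (p + g)) (p : G) : P p ↔ P (p + g) := by
  refine ⟨h p, fun hp => ?_⟩
  have hk : ∀ k : ℕ, P (p + g + k • g) := by
    intro k
    induction k with
    | zero => simpa using hp
    | succ k ih => rw [succ_nsmul, ← add_assoc]; exact h _ ih
  have := hk (addOrderOf g - 1)
  rwa [add_assoc, ← succ_nsmul', Nat.sub_add_cancel (addOrderOf_pos g), addOrderOf_nsmul_eq_zero,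
    add_zero] at this

/-- If the length `l` is not realised by segments as in `hasCycle_of_red_blue` (the hypothesis
`h`), the red set `R` is invariant under `(1, 1)` or under `(1, -1)`. -/
lemma invariant_of_no_cycle {n m l : ℕ} (hn : 2 ≤ n) (hm : 2 ≤ m) (hl3 : 3 ≤ l)
    (hl : l ≤ n + m) {R : ZMod n → ZMod m → Prop}
    (h : ∀ s t : ℕ, s < n → t < m → s + t + 2 = l → ∀ a b, R (a + s) b → R a (b + t)) :
    ∃ e : ZMod m, (e = 1 ∨ e = -1) ∧ ∀ a b, R a b ↔ R (a + 1) (b + e) := by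
  have : NeZero n := ⟨by omega⟩
  have : NeZero m := ⟨by omega⟩
  have key : ∀ s t : ℕ, s < n → t < m → s + t + 2 = l →
      ∀ a b, R (a + s) b ↔ R a (b + t) := by
    intro s t hs ht hst a b
    have := iff_add_of_imp (P := fun p : ZMod n × ZMod m => R p.1 p.2)
      (g := (-(s : ZMod n), (t : ZMod m)))
      (fun p hp => h s t hs ht hst (p.1 + -(s : ZMod n)) p.2 (by simpa using hp)) (a + s, b)
    simpa using this
  rcases hl.lt_or_eq with hlt | heq
  · refine ⟨1, Or.inl rfl, fun a b => ?_⟩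
    obtain ⟨s, t, hs, ht, hst⟩ : ∃ s t : ℕ, s + 1 < n ∧ t + 1 < m ∧ s + t + 3 = l :=
      ⟨min (n - 2) (l - 3), l - 3 - min (n - 2) (l - 3), by omega, by omega, by omega⟩
    have e1 := key s (t + 1) (by omega) ht (by omega) (a - s) b
    have e2 := key (s + 1) t hs (by omega) (by omega) (a - s) (b + 1)
    have c1 : a - (s : ZMod n) + s = a := by ring
    have c2 : a - (s : ZMod n) + (s + 1 : ℕ) = a + 1 := by push_cast; ring
    have c3 : b + 1 + (t : ZMod m) = b + (t + 1 : ℕ) := by push_cast; ring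
    rw [c1] at e1
    rw [c2, c3] at e2
    exact e1.trans e2.symm
  · refine ⟨-1, Or.inr rfl, fun a b => ?_⟩
    have e1 := key (n - 1) (m - 1) (by omega) (by omega) (by omega) (a + 1) b
    have c1 : a + 1 + ((n - 1 : ℕ) : ZMod n) = a := by
      rw [Nat.cast_sub (by omega)]; simp
    have c2 : b + ((m - 1 : ℕ) : ZMod m) = b + -1 := by
      rw [Nat.cast_sub (by omega)]; simp
    rwa [c1, c2] at e1

/-- A set invariant under `(1, ±1)` which contains `gcd n m` consecutive entries of one row is
everything. -/
lemma forall_of_invariant {n m : ℕ} (hn : n ≠ 0) (hm : m ≠ 0) {R : ZMod n → ZMod m → Prop}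
    {e : ZMod m} (he : e = 1 ∨ e = -1) (hinv : ∀ a b, R a b ↔ R (a + 1) (b + e))
    (a₀ : ZMod n) (b₀ : ZMod m) (hrow : ∀ j : ℕ, j < Nat.gcd n m → R a₀ (b₀ + j)) :
    ∀ a b, R a b := by
  have : NeZero n := ⟨hn⟩
  have : NeZero m := ⟨hm⟩
  have hnat : ∀ k : ℕ, ∀ a b, R a b ↔ R (a + k) (b + k * e) := by
    intro k
    induction k with
    | zero => intro a b; simp
    | succ k ih =>
      intro a b
      rw [ih, hinv]
      have c1 : a + (k : ZMod n) + 1 = a + (k + 1 : ℕ) := by push_cast; ring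
      have c2 : b + (k : ZMod m) * e + e = b + (k + 1 : ℕ) * e := by push_cast; ring
      rw [c1, c2]
  -- some multiple `k` of `n` satisfies `k * e = gcd n m` in `ZMod m`
  have hbez : ((Nat.gcd n m : ℕ) : ZMod m) = n * (Nat.gcdA n m : ZMod m) := by
    have := congrArg (Int.cast : ℤ → ZMod m) (Nat.gcd_eq_gcd_ab n m)
    simpa using this
  have hd : ∀ a b, R a b ↔ R a (b + (Nat.gcd n m : ℕ)) := by
    intro a b
    have := hnat (n * ((Nat.gcdA n m : ZMod m) * e).val) a b
    have hee : e * e = 1 := by rcases he with rfl | rfl <;> simp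
    have c2 : ((n * ((Nat.gcdA n m : ZMod m) * e).val : ℕ) : ZMod m) * e
        = (Nat.gcd n m : ℕ) := by
      rw [hbez, Nat.cast_mul, ZMod.natCast_zmod_val]
      calc _ = (n : ZMod m) * (Nat.gcdA n m : ZMod m) * (e * e) := by ring
        _ = _ := by rw [hee, mul_one]
    rw [c2] at this
    simpa using this
  have hdq : ∀ q : ℕ, ∀ a b, R a b ↔ R a (b + (Nat.gcd n m * q : ℕ)) := by
    intro q
    induction q with
    | zero => intro a b; simp
    | succ q ih =>
      intro a b
      rw [ih, hd, add_assoc, ← Nat.cast_add, Nat.mul_succ]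
  have hfull : ∀ b, R a₀ b := by
    intro b
    have hpos : 0 < Nat.gcd n m := Nat.gcd_pos_of_pos_left _ (Nat.pos_of_ne_zero hn)
    have h1 := (hdq ((b - b₀).val / Nat.gcd n m) _ _).1
      (hrow ((b - b₀).val % Nat.gcd n m) (Nat.mod_lt _ hpos))
    rw [add_assoc, ← Nat.cast_add, Nat.mod_add_div, ZMod.natCast_zmod_val] at h1
    simpa using h1
  intro a b
  have h1 := (hnat (a - a₀).val a₀ (b - (a - a₀).val * e)).1 (hfull _)
  rw [ZMod.natCast_zmod_val] at h1
  simpa using h1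

/-- A vertex set `S` that no arc of `D` leaves cannot be left by a path. -/
lemma not_reachable_of_closed (D : FinDigraph α) {S : Finset α} {u v : α} (hu : u ∈ S) (hv : v ∉ S)
    (hclosed : ∀ p ∈ S, ∀ q, D.Arc p q → q ∈ S) : ¬ Relation.ReflTransGen D.Arc u v := by
  refine fun h => hv ?_
  clear hv
  induction h with
  | refl => exact hu
  | tail _ hab ih => exact hclosed _ ih _ hab

end FinDigraph

theorem stmt_3 {α : Type} [DecidableEq α]
    (D1 D2 D : FinDigraph α) {n m : ℕ} (d : ℕ)
    (x : ZMod n → α) (y : ZMod m → α)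
    (hx : D1.IsHamCycle x) (hy : D2.IsHamCycle y)
    (hmn : m ≤ n) (hd : d = Nat.gcd n m)
    (hdisj : Disjoint D1.verts D2.verts)
    (hD : GenSum2 D1 D2 D) (hstrong : D.Strong)
    (hsing : (∃ s : ZMod n, DStarSingular D y d (x s)) ∨
             (∃ r : ZMod m, DStarSingular D x d (y r))) :
    D.Pancyclic := by
  have hn : 2 ≤ n := two_le_of_cycleOn D1 hx.1
  have hm : 2 ≤ m := two_le_of_cycleOn D2 hy.1
  have hcard : D.verts.card = n + m := by
    rw [hD.1, Finset.card_union_of_disjoint hdisj, card_of_isHamCycle D1 hx,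
      card_of_isHamCycle D2 hy]
  obtain ⟨hverts, hind1, hind2, hxor⟩ := hD
  have hx1 : ∀ i, x i ∈ D1.verts := fun i => D1.arc_mem_left (hx.1.2 i)
  have hy2 : ∀ j, y j ∈ D2.verts := fun j => D2.arc_mem_left (hy.1.2 j)
  have hxD : D.CycleOn x := ⟨hx.1.1, fun i => (hind1 _ _ (hx1 _) (hx1 _)).2 (hx.1.2 i)⟩
  have hyD : D.CycleOn y := ⟨hy.1.1, fun i => (hind2 _ _ (hy2 _) (hy2 _)).2 (hy.1.2 i)⟩
  have hnot1 : ∀ v ∈ D2.verts, v ∉ D1.verts := fun v h2 h1 =>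
    Finset.disjoint_left.1 hdisj h1 h2
  have hne : ∀ i j, x i ≠ y j := fun i j h => hnot1 _ (hy2 j) (h ▸ hx1 i)
  have hblue : ∀ i j, ¬ D.Arc (x i) (y j) ↔ D.Arc (y j) (x i) := by
    intro i j
    rcases hxor _ _ (hx1 i) (hy2 j) with ⟨h1, h2⟩ | ⟨h1, h2⟩ <;> simp [h1, h2]
  have hmem : ∀ v ∈ D.verts, v ∈ D1.verts ∨ v ∈ D2.verts := fun v hv => by
    rw [hverts] at hv
    exact Finset.mem_union.1 hv
  have hxm : ∀ i, x i ∈ D.verts := fun i => D.arc_mem_left (hxD.2 i)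
  have hym : ∀ i, y i ∈ D.verts := fun i => D.arc_mem_left (hyD.2 i)
  have hnotred : ¬ ∀ a b, D.Arc (x a) (y b) := by
    intro hall
    refine not_reachable_of_closed D (hy2 0) (fun h => hnot1 _ h (hx1 0)) ?_
      (hstrong _ (hym 0) _ (hxm 0))
    intro p hp q hpq
    refine (hmem q (D.arc_mem_right hpq)).resolve_left fun hq => ?_
    obtain ⟨i, rfl⟩ := hx.2 q hq
    obtain ⟨j, rfl⟩ := hy.2 p hp
    exact (hblue i j).2 hpq (hall i j)
  have hnotblue : ¬ ∀ a b, ¬ D.Arc (x a) (y b) := by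
    intro hall
    refine not_reachable_of_closed D (hx1 0) (hnot1 _ (hy2 0)) ?_ (hstrong _ (hxm 0) _ (hym 0))
    intro p hp q hpq
    refine (hmem q (D.arc_mem_right hpq)).resolve_right fun hq => ?_
    obtain ⟨i, rfl⟩ := hx.2 p hp
    obtain ⟨j, rfl⟩ := hy.2 q hq
    exact hall i j hpq
  refine ⟨by omega, fun l hl3 hl => ?_⟩
  by_contra hno
  obtain ⟨e, he, hinv⟩ := invariant_of_no_cycle hn hm hl3 (by omega)
    (R := fun a b => D.Arc (x a) (y b)) (by
      rintro s t hs ht rfl a b hred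
      by_contra hbl
      exact hno (hasCycle_of_red_blue D hxD hyD hne hs ht a b hred ((hblue _ _).1 hbl)))
  -- the same invariance with the two coordinates exchanged
  have hinv' : ∃ e' : ZMod n, (e' = 1 ∨ e' = -1) ∧
      ∀ b a, D.Arc (x a) (y b) ↔ D.Arc (x (a + e')) (y (b + 1)) := by
    rcases he with rfl | rfl
    · exact ⟨1, Or.inl rfl, fun b a => hinv a b⟩
    · refine ⟨-1, Or.inr rfl, fun b a => ?_⟩
      have := hinv (a + -1) (b + 1)
      simp only [neg_add_cancel_right, add_neg_cancel_right] at this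
      exact this.symm
  obtain ⟨e', he', hinv'⟩ := hinv'
  have hn0 : n ≠ 0 := by omega
  have hm0 : m ≠ 0 := by omega
  subst hd
  rcases hsing with ⟨s, i, hs | hs⟩ | ⟨r, i, hr | hr⟩
  · exact hnotred (forall_of_invariant hn0 hm0 he hinv s i hs)
  · exact hnotblue (forall_of_invariant (R := fun a b => ¬ D.Arc (x a) (y b)) hn0 hm0 he
      (fun a b => not_congr (hinv a b)) s i fun j hj => (hblue _ _).2 (hs j hj))
  · rw [Nat.gcd_comm] at hr
    have := forall_of_invariant (R := fun b a => ¬ D.Arc (x a) (y b)) hm0 hn0 he'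
      (fun b a => not_congr (hinv' b a)) r i fun j hj => (hblue _ _).2 (hr j hj)
    exact hnotblue fun a b => this b a
  · rw [Nat.gcd_comm] at hr
    have := forall_of_invariant (R := fun b a => D.Arc (x a) (y b)) hm0 hn0 he' hinv' r i hr
    exact hnotred fun a b => this b a
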